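/- arXiv:1301.7299 — 3 statements merged into one kernel-verified Lean document; each statement's English description precedes it below -/
import Mathlib

section
/- Uniqueness of mild solutions on a common time interval (the uniqueness assertion of Theorem 5.1): Assume V, W, J, S are as in the context and let Q : V → W be locally Lipschitz. If 0 < T ≤ 1 and u, v : [0,T] → V are both mild solutions of the integral equation u(t) = S(t)(J u₀) + ∫₀ᵗ S(t−s)(Q(u(s))) ds with the same initial value u₀ ∈ V, then u(t) = v(t) for all t ∈ [0,T]. -/
/-!
Uniqueness follows from a Gronwall-type contraction on short intervals, continued along `[0, T]`.

The bound `‖S t w‖ ≤ C t^(-γ) ‖w‖` together with strong continuity makes `(t, w) ↦ S t w` jointly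
continuous on `(0, 1] × W`, so `s ↦ S (t - s) (f s)` is dominated by an integrable power and is
integrable on `[0, t]` for every continuous `f` (`intervalIntegrable_convolution`). Hence the
difference of two mild solutions is the integral of `S (t - s) (Q (u s) - Q (v s))`.

If `u = v` on `[0, a]`, then near `a` both solutions stay in a neighbourhood of `u a` on which `Q`
is `L`-Lipschitz, and the maximum `M` of `‖u - v‖` on `[a, b]` satisfies
`M ≤ C L M (b - a)^(1 - γ) / (1 - γ) ≤ M / 2` for `b` close to `a`, so `M = 0`
(`eqOn_extend`). The set of `t` with `u = v` on `[0, t]` is closed in `[0, T]`, contains `0`, and by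
the previous step has points to the right of each of its points below `T`; hence it is all of
`[0, T]`.
-/

open MeasureTheory Set Filter

/-- A mild solution on `[0, T]` with initial value `u₀` of the abstract semilinear
equation: a continuous function `u : [0,T] → V` with `u 0 = u₀` and
`u t = S t (J u₀) + ∫₀ᵗ S (t - s) (Q (u s)) ds` for all `t ∈ (0, T]`. -/
def IsMildSolution {V W : Type*} [NormedAddCommGroup V] [NormedSpace ℝ V]
    [NormedAddCommGroup W] [NormedSpace ℝ W]
    (S : ℝ → (W →L[ℝ] V)) (J : V →L[ℝ] W) (Q : V → W) (u₀ : V) (T : ℝ) (u : ℝ → V) : Prop :=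
  ContinuousOn u (Set.Icc 0 T) ∧ u 0 = u₀ ∧
    ∀ t ∈ Set.Ioc (0 : ℝ) T, u t = S t (J u₀) + ∫ s in (0 : ℝ)..t, S (t - s) (Q (u s))

theorem intervalIntegrable_singular_kernel {γ : ℝ} (hγ : γ < 1) (K a t : ℝ) :
    IntervalIntegrable (fun s => K * (t - s) ^ (-γ)) volume a t := by
  have h := (intervalIntegral.intervalIntegrable_rpow' (a := t - a) (b := 0) (r := -γ)
    (by linarith)).comp_sub_left t
  simp only [sub_sub_cancel, sub_zero] at h
  exact h.const_mul K

theorem integral_singular_kernel {γ : ℝ} (hγ : γ < 1) (K a t : ℝ) :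
    ∫ s in a..t, K * (t - s) ^ (-γ) = K * ((t - a) ^ (1 - γ) / (1 - γ)) := by
  rw [intervalIntegral.integral_const_mul,
    intervalIntegral.integral_comp_sub_left (fun x : ℝ => x ^ (-γ)) t,
    integral_rpow (Or.inl (by linarith)), sub_self,
    Real.zero_rpow (by linarith : -γ + 1 ≠ 0), sub_zero, neg_add_eq_sub]

section

variable {V W : Type*} [NormedAddCommGroup V] [NormedSpace ℝ V]
    [NormedAddCommGroup W] [NormedSpace ℝ W]

/-- Joint continuity: the operator norms of `S` are locally bounded on `(0, 1]`, so strong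
continuity upgrades to continuity of `s ↦ S (t - s) (f s)`. -/
theorem continuousOn_convolution {S : ℝ → (W →L[ℝ] V)} {C γ : ℝ}
    (hS3 : ∀ w : W, ∀ t : ℝ, 0 < t → t ≤ 1 → ‖S t w‖ ≤ C * t ^ (-γ) * ‖w‖)
    (hS4 : ∀ w : W, ContinuousOn (fun t => S t w) (Ioi 0))
    {t : ℝ} (ht1 : t ≤ 1) {f : ℝ → W} (hf : ContinuousOn f (Icc 0 t)) :
    ContinuousOn (fun s => S (t - s) (f s)) (Ico 0 t) := by
  intro s₀ hs₀
  have hpos : 0 < t - s₀ := sub_pos.2 hs₀.2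
  have hsub : Tendsto (fun s : ℝ => t - s) (nhdsWithin s₀ (Ico 0 t)) (nhds (t - s₀)) :=
    ((continuous_const.sub continuous_id).tendsto s₀).mono_left nhdsWithin_le_nhds
  have hfs : Tendsto f (nhdsWithin s₀ (Ico 0 t)) (nhds (f s₀)) :=
    (hf s₀ ⟨hs₀.1, hs₀.2.le⟩).mono Ico_subset_Icc_self
  have h1 : Tendsto (fun s => S (t - s) (f s₀)) (nhdsWithin s₀ (Ico 0 t))
      (nhds (S (t - s₀) (f s₀))) :=
    ((hS4 (f s₀)).continuousAt (Ioi_mem_nhds hpos)).tendsto.comp hsub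
  have hbd : Tendsto (fun s => C * (t - s) ^ (-γ) * ‖f s - f s₀‖) (nhdsWithin s₀ (Ico 0 t))
      (nhds 0) := by
    have hd : Tendsto (fun s => ‖f s - f s₀‖) (nhdsWithin s₀ (Ico 0 t)) (nhds 0) :=
      tendsto_iff_norm_sub_tendsto_zero.1 hfs
    simpa using ((hsub.rpow_const (p := -γ) (Or.inl hpos.ne')).const_mul C).mul hd
  have h2 : Tendsto (fun s => S (t - s) (f s - f s₀)) (nhdsWithin s₀ (Ico 0 t)) (nhds 0) := by
    refine squeeze_zero_norm' ?_ hbd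
    filter_upwards [self_mem_nhdsWithin] with s hs
    exact hS3 _ _ (sub_pos.2 hs.2) (by linarith [hs.1])
  have h3 := h2.add h1
  simp only [map_sub, sub_add_cancel, zero_add] at h3
  exact h3

theorem intervalIntegrable_convolution {S : ℝ → (W →L[ℝ] V)} {C γ : ℝ}
    (hC : 0 < C) (hγ : γ < 1)
    (hS3 : ∀ w : W, ∀ t : ℝ, 0 < t → t ≤ 1 → ‖S t w‖ ≤ C * t ^ (-γ) * ‖w‖)
    (hS4 : ∀ w : W, ContinuousOn (fun t => S t w) (Ioi 0))
    {t : ℝ} (ht0 : 0 ≤ t) (ht1 : t ≤ 1) {f : ℝ → W} (hf : ContinuousOn f (Icc 0 t)) :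
    IntervalIntegrable (fun s => S (t - s) (f s)) volume 0 t := by
  obtain ⟨B, hB⟩ := isCompact_Icc.exists_bound_of_continuousOn hf
  have hg := intervalIntegrable_singular_kernel hγ (C * B) 0 t
  rw [intervalIntegrable_iff_integrableOn_Ico_of_le ht0] at hg ⊢
  refine hg.mono' ((continuousOn_convolution hS3 hS4 ht1 hf).aestronglyMeasurable
    measurableSet_Ico) ?_
  refine (ae_restrict_iff' measurableSet_Ico).2 (Eventually.of_forall fun s hs => ?_)
  have hp : 0 < t - s := sub_pos.2 hs.2
  calc ‖S (t - s) (f s)‖ ≤ C * (t - s) ^ (-γ) * ‖f s‖ := hS3 _ _ hp (by linarith [hs.1])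
    _ ≤ C * (t - s) ^ (-γ) * B := by
        have := hB s ⟨hs.1, hs.2.le⟩
        gcongr
    _ = C * B * (t - s) ^ (-γ) := by ring

/-- If two mild solutions agree on `[0, a]` and `Q` is `L`-Lipschitz along them on `[a, b]`, then
their distance on `[a, b]` contracts by the factor `C L (b - a)^(1 - γ) / (1 - γ)`. -/
theorem norm_sub_le_of_eqOn {J : V →L[ℝ] W} {S : ℝ → (W →L[ℝ] V)} {C γ : ℝ}
    (hC : 0 < C) (hγ : γ < 1)
    (hS3 : ∀ w : W, ∀ t : ℝ, 0 < t → t ≤ 1 → ‖S t w‖ ≤ C * t ^ (-γ) * ‖w‖)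
    (hS4 : ∀ w : W, ContinuousOn (fun t => S t w) (Ioi 0))
    {Q : V → W} (hQ : LocallyLipschitz Q) {T : ℝ} (hT1 : T ≤ 1) {u₀ : V} {u v : ℝ → V}
    (hu : IsMildSolution S J Q u₀ T u) (hv : IsMildSolution S J Q u₀ T v)
    {a b L M : ℝ} (ha : 0 ≤ a) (hbT : b ≤ T) (hL : 0 ≤ L) (heq : EqOn u v (Icc 0 a))
    (hlip : ∀ s ∈ Icc a b, ‖Q (u s) - Q (v s)‖ ≤ L * ‖u s - v s‖)
    (hM : ∀ s ∈ Icc a b, ‖u s - v s‖ ≤ M) {t : ℝ} (ht : t ∈ Icc a b) :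
    ‖u t - v t‖ ≤ C * L * M * ((b - a) ^ (1 - γ) / (1 - γ)) := by
  have hM0 : 0 ≤ M := (norm_nonneg _).trans (hM t ht)
  have hγ' : 0 < 1 - γ := by linarith
  have hba : 0 ≤ b - a := by linarith [ht.1, ht.2]
  rcases ht.1.eq_or_lt with rfl | hat
  · rw [heq ⟨ha, le_rfl⟩, sub_self, norm_zero]
    positivity
  have ht0 : 0 < t := ha.trans_lt hat
  have htT : t ≤ T := ht.2.trans hbT
  have hint : ∀ x : ℝ → V, ContinuousOn x (Icc 0 T) →
      IntervalIntegrable (fun s => S (t - s) (Q (x s))) volume 0 t := fun x hx =>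
    intervalIntegrable_convolution hC hγ hS3 hS4 ht0.le (htT.trans hT1)
      (hQ.continuous.comp_continuousOn (hx.mono (Icc_subset_Icc_right htT)))
  have hiu := hint u hu.1
  have hiv := hint v hv.1
  have hd := hiu.sub hiv
  have hmem : a ∈ uIcc 0 t := by rw [uIcc_of_le ht0.le]; exact ⟨ha, hat.le⟩
  have hd1 := hd.mono_set (uIcc_subset_uIcc left_mem_uIcc hmem)
  have hd2 := hd.mono_set (uIcc_subset_uIcc hmem right_mem_uIcc)
  have hzero : ∫ s in (0 : ℝ)..a, (S (t - s) (Q (u s)) - S (t - s) (Q (v s))) = 0 := by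
    refine (intervalIntegral.integral_congr (g := fun _ => (0 : V)) fun s hs => ?_).trans (by simp)
    rw [uIcc_of_le ha] at hs
    simp [heq hs]
  have hdiff : u t - v t = ∫ s in a..t, (S (t - s) (Q (u s)) - S (t - s) (Q (v s))) := by
    rw [hu.2.2 t ⟨ht0, htT⟩, hv.2.2 t ⟨ht0, htT⟩, add_sub_add_left_eq_sub,
      ← intervalIntegral.integral_sub hiu hiv,
      ← intervalIntegral.integral_add_adjacent_intervals hd1 hd2, hzero, zero_add]
  have hbound : ‖u t - v t‖ ≤ ∫ s in a..t, C * L * M * (t - s) ^ (-γ) := by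
    rw [hdiff]
    refine intervalIntegral.norm_integral_le_of_norm_le hat.le ?_
      (intervalIntegrable_singular_kernel hγ _ a t)
    -- The endpoint `s = t`, where `S 0` is unconstrained, is a null set.
    filter_upwards [compl_mem_ae_iff.2 (measure_singleton t)] with s hst hs
    have hlt : s < t := lt_of_le_of_ne hs.2 hst
    have hp : 0 < t - s := sub_pos.2 hlt
    have hsm : s ∈ Icc a b := ⟨hs.1.le, hlt.le.trans ht.2⟩
    rw [← map_sub]
    calc _ ≤ C * (t - s) ^ (-γ) * ‖Q (u s) - Q (v s)‖ :=
          hS3 _ _ hp (by linarith [hs.1])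
      _ ≤ C * (t - s) ^ (-γ) * (L * M) := by
          have := (hlip s hsm).trans (mul_le_mul_of_nonneg_left (hM s hsm) hL)
          gcongr
      _ = C * L * M * (t - s) ^ (-γ) := by ring
  rw [integral_singular_kernel hγ] at hbound
  refine hbound.trans ?_
  have h1 : 0 ≤ t - a := by linarith
  have h2 : t - a ≤ b - a := by linarith [ht.2]
  gcongr

/-- Continuation step: agreement on `[0, a]` with `a < T` propagates a little past `a`. -/
theorem eqOn_extend {J : V →L[ℝ] W} {S : ℝ → (W →L[ℝ] V)} {C γ : ℝ}
    (hC : 0 < C) (hγ : γ < 1)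
    (hS3 : ∀ w : W, ∀ t : ℝ, 0 < t → t ≤ 1 → ‖S t w‖ ≤ C * t ^ (-γ) * ‖w‖)
    (hS4 : ∀ w : W, ContinuousOn (fun t => S t w) (Ioi 0))
    {Q : V → W} (hQ : LocallyLipschitz Q) {T : ℝ} (hT1 : T ≤ 1) {u₀ : V} {u v : ℝ → V}
    (hu : IsMildSolution S J Q u₀ T u) (hv : IsMildSolution S J Q u₀ T v)
    {a y : ℝ} (ha : 0 ≤ a) (haT : a < T) (hay : a < y) (heq : EqOn u v (Icc 0 a)) :
    ∃ b ∈ Ioc a y, EqOn u v (Icc 0 b) := by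
  obtain ⟨K, N, hN, hK⟩ := hQ (u a)
  have hγ' : 0 < 1 - γ := by linarith
  have hloc : ∀ x : ℝ → V, ContinuousOn x (Icc 0 T) → x a = u a →
      ∀ᶠ s in nhdsWithin a (Ici a), x s ∈ N := by
    intro x hx hxa
    have h1 : ContinuousWithinAt x (Icc a T) a :=
      (hx a ⟨ha, haT.le⟩).mono (Icc_subset_Icc_left ha)
    have h2 := h1.tendsto
    rw [nhdsWithin_Icc_eq_nhdsGE haT, hxa] at h2
    exact h2 hN
  have hU := (hloc u hu.1 rfl).and (hloc v hv.1 (heq ⟨ha, le_rfl⟩).symm)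
  obtain ⟨c, hac, hc⟩ := (mem_nhdsGE_iff_exists_Icc_subset).1 hU
  have hsmall : ∀ᶠ b in nhdsWithin a (Ioi a),
      C * K * ((b - a) ^ (1 - γ) / (1 - γ)) < 1 / 2 := by
    have hcont : ContinuousAt (fun b : ℝ => C * K * ((b - a) ^ (1 - γ) / (1 - γ))) a :=
      ((((continuous_id.sub continuous_const).continuousAt).rpow_const
        (Or.inr hγ'.le)).div_const _).const_mul _
    have h := hcont.tendsto
    simp only [sub_self, Real.zero_rpow hγ'.ne', zero_div, mul_zero] at h
    exact (h.mono_left nhdsWithin_le_nhds).eventually (gt_mem_nhds (by norm_num))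
  obtain ⟨b, hb, hbm⟩ := (hsmall.and
    (Ioc_mem_nhdsGT (lt_min (lt_min hay haT) hac))).exists
  have hb1 := hbm.2
  simp only [le_min_iff] at hb1
  obtain ⟨⟨hby, hbT⟩, hbc⟩ := hb1
  have hab : a < b := hbm.1
  refine ⟨b, ⟨hab, hby⟩, ?_⟩
  have hlip : ∀ s ∈ Icc a b, ‖Q (u s) - Q (v s)‖ ≤ K * ‖u s - v s‖ := by
    intro s hs
    have h := hc ⟨hs.1, hs.2.trans hbc⟩
    simpa only [dist_eq_norm] using hK.dist_le_mul _ h.1 _ h.2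
  have hsub : Icc a b ⊆ Icc 0 T := Icc_subset_Icc ha hbT
  obtain ⟨τ, hτ, hmax⟩ := isCompact_Icc.exists_isMaxOn (nonempty_Icc.2 hab.le)
    ((hu.1.mono hsub).sub (hv.1.mono hsub)).norm
  have hM : ∀ s ∈ Icc a b, ‖u s - v s‖ ≤ ‖u τ - v τ‖ := fun s hs => hmax hs
  have hcontr := norm_sub_le_of_eqOn hC hγ hS3 hS4 hQ hT1 hu hv ha hbT K.2 heq hlip hM hτ
  have hle : ‖u τ - v τ‖ ≤ 0 := by
    have h0 := norm_nonneg (u τ - v τ)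
    have h1 := mul_le_mul_of_nonneg_right hb.le h0
    have h2 : C * K * ‖u τ - v τ‖ * ((b - a) ^ (1 - γ) / (1 - γ)) =
      C * K * ((b - a) ^ (1 - γ) / (1 - γ)) * ‖u τ - v τ‖ := by ring
    have h3 : ‖u τ - v τ‖ ≤ C * K * ‖u τ - v τ‖ * ((b - a) ^ (1 - γ) / (1 - γ)) := hcontr
    linarith
  intro s hs
  rcases le_total s a with h | h
  · exact heq ⟨hs.1, h⟩
  · exact sub_eq_zero.1 (norm_le_zero_iff.1 ((hM s ⟨h, hs.2⟩).trans hle))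

end

/-- Uniqueness of mild solutions on a common time interval (the uniqueness assertion of
Theorem 5.1). -/
theorem mild_solutions_unique
    {V W : Type*} [NormedAddCommGroup V] [NormedSpace ℝ V] [CompleteSpace V]
    [NormedAddCommGroup W] [NormedSpace ℝ W] [CompleteSpace W]
    (J : V →L[ℝ] W) (S : ℝ → (W →L[ℝ] V)) (C γ : ℝ)
    (hC : 0 < C) (hγ : γ ∈ Set.Ico (0 : ℝ) 1)
    (hS1 : ∀ s t : ℝ, 0 < s → 0 < t → S (t + s) = (S t).comp (J.comp (S s)))
    (hS2 : ∀ v : V, ContinuousOn (fun t => S t (J v)) (Set.Ioi 0) ∧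
      Filter.Tendsto (fun t => S t (J v)) (nhdsWithin 0 (Set.Ioi 0)) (nhds v))
    (hS3 : ∀ w : W, ∀ t : ℝ, 0 < t → t ≤ 1 → ‖S t w‖ ≤ C * t ^ (-γ) * ‖w‖)
    (hS4 : ∀ w : W, ContinuousOn (fun t => S t w) (Set.Ioi 0))
    (Q : V → W) (hQ : LocallyLipschitz Q)
    (T : ℝ) (hT0 : 0 < T) (hT1 : T ≤ 1) (u₀ : V) (u v : ℝ → V)
    (hu : IsMildSolution S J Q u₀ T u) (hv : IsMildSolution S J Q u₀ T v) :
    Set.EqOn u v (Set.Icc 0 T) := by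
  let A : Set ℝ := {t | EqOn u v (Icc 0 t)}
  have hE : IsClosed {r | r ∈ Icc 0 T ∧ u r = v r} := by
    have h := (hu.1.sub hv.1).preimage_isClosed_of_isClosed isClosed_Icc
      (isClosed_singleton (x := (0 : V)))
    convert h using 1
    ext r
    simp [sub_eq_zero]
  have hA : IsClosed (A ∩ Icc 0 T) := by
    refine isClosed_of_closure_subset fun t ht => ?_
    have htT : t ∈ Icc 0 T := closure_minimal inter_subset_right isClosed_Icc ht
    have hut : u t = v t :=
      (closure_minimal (fun r (hr : r ∈ A ∩ Icc 0 T) =>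
        show r ∈ Icc 0 T ∧ u r = v r from ⟨hr.2, hr.1 ⟨hr.2.1, le_rfl⟩⟩) hE ht).2
    refine ⟨fun r hr => ?_, htT⟩
    rcases hr.2.eq_or_lt with rfl | hrt
    · exact hut
    · obtain ⟨t', ht', hmem⟩ := mem_closure_iff.1 ht (Ioi r) isOpen_Ioi hrt
      exact hmem.1 ⟨hr.1, le_of_lt ht'⟩
  have h0 : (0 : ℝ) ∈ A := by
    intro r hr
    rw [show r = 0 from le_antisymm hr.2 hr.1, hu.2.1, hv.2.1]
  have hsub : Icc 0 T ⊆ A := by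
    refine hA.Icc_subset_of_forall_exists_gt h0 fun x hx y hy => ?_
    obtain ⟨b, hb, hbe⟩ :=
      eqOn_extend hC hγ.2 hS3 hS4 hQ hT1 hu hv hx.2.1 hx.2.2 hy hx.1
    exact ⟨b, hbe, hb⟩
  exact hsub ⟨hT0.le, le_rfl⟩
end

section
/- Uniqueness of solutions to the abstract biharmonic heat equation (Lemma on self-adjoint operators, part (i)): Let H be a complex Hilbert space and let D be a symmetric linear operator defined on a subspace dom(D) ⊆ H, i.e. ⟪Dx, y⟫ = ⟪x, Dy⟫ for all x, y ∈ dom(D). Suppose u, v : [0,∞) → H are continuous on [0,∞), differentiable on (0,∞), satisfy u(t) ∈ dom(D), D u(t) ∈ dom(D), v(t) ∈ dom(D), D v(t) ∈ dom(D) for all t > 0, solve u′(t) = −D(D u(t)) and v′(t) = −D(D v(t)) for all t > 0, and satisfy u(0) = v(0). Then u(t) = v(t) for all t ≥ 0. -/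
open scoped InnerProductSpace

/-!
The proof is the energy method. The difference `w = u - v` solves the same equation with
`w 0 = 0`, and symmetry of `D` gives
`(d/dt) ‖w t‖² = 2 Re ⟪w t, -D (D (w t))⟫ = -2 ‖D (w t)‖² ≤ 0` for `t > 0`.
As `‖w‖²` is continuous on `[0, ∞)`, it is antitone there, so `‖w t‖² ≤ ‖w 0‖² = 0`.
-/

/-- Uniqueness of solutions to the abstract biharmonic heat equation
(Lemma on self-adjoint operators, part (i)): if `D` is a symmetric linear operator on a
subspace `dom` of a complex Hilbert space `H`, and `u, v` are continuous on `[0,∞)`,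
solve `u′(t) = −D(D u(t))` for `t > 0` (with `u(t), D u(t) ∈ dom`), and agree at `t = 0`,
then they agree for all `t ≥ 0`. -/
theorem biharmonic_heat_uniqueness
    {H : Type*} [NormedAddCommGroup H] [InnerProductSpace ℂ H] [CompleteSpace H]
    (dom : Submodule ℂ H) (D : dom →ₗ[ℂ] H)
    (hsym : ∀ x y : dom, ⟪D x, (y : H)⟫_ℂ = ⟪(x : H), D y⟫_ℂ)
    (u v : ℝ → H)
    (hu_cont : ContinuousOn u (Set.Ici 0))
    (hv_cont : ContinuousOn v (Set.Ici 0))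
    (hu_mem : ∀ t : ℝ, 0 < t → u t ∈ dom)
    (hv_mem : ∀ t : ℝ, 0 < t → v t ∈ dom)
    (hDu_mem : ∀ (t : ℝ) (ht : 0 < t), D ⟨u t, hu_mem t ht⟩ ∈ dom)
    (hDv_mem : ∀ (t : ℝ) (ht : 0 < t), D ⟨v t, hv_mem t ht⟩ ∈ dom)
    (hu_deriv : ∀ (t : ℝ) (ht : 0 < t),
      HasDerivAt u (-(D ⟨D ⟨u t, hu_mem t ht⟩, hDu_mem t ht⟩)) t)
    (hv_deriv : ∀ (t : ℝ) (ht : 0 < t),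
      HasDerivAt v (-(D ⟨D ⟨v t, hv_mem t ht⟩, hDv_mem t ht⟩)) t)
    (h0 : u 0 = v 0) :
    ∀ t : ℝ, 0 ≤ t → u t = v t := by
  have hderiv : ∀ t : ℝ, 0 < t → ∃ e : ℝ, e ≤ 0 ∧
      HasDerivAt (fun s => (⟪u s - v s, u s - v s⟫_ℂ).re) e t := by
    intro t ht
    set a : dom := ⟨u t, hu_mem t ht⟩ - ⟨v t, hv_mem t ht⟩ with ha
    set b : dom := ⟨D ⟨u t, hu_mem t ht⟩, hDu_mem t ht⟩ -
      ⟨D ⟨v t, hv_mem t ht⟩, hDv_mem t ht⟩ with hb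
    have hba : (b : H) = D a := by simp [ha, hb]
    have haw : (a : H) = u t - v t := by simp [ha]
    have hw : HasDerivAt (fun s => u s - v s) (-(D b)) t := by
      convert (hu_deriv t ht).sub (hv_deriv t ht) using 1
      · rfl
      · rw [hb, map_sub]
        abel
    refine ⟨_, ?_, Complex.reCLM.hasFDerivAt.comp_hasDerivAt t (hw.inner ℂ hw)⟩
    have h1 : ⟪(a : H), D b⟫_ℂ = ⟪(b : H), (b : H)⟫_ℂ := by rw [← hsym, ← hba]
    have h2 : ⟪D b, (a : H)⟫_ℂ = ⟪(b : H), (b : H)⟫_ℂ := by rw [hsym, ← hba]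
    have h3 : 0 ≤ (⟪(b : H), (b : H)⟫_ℂ).re := inner_self_nonneg (𝕜 := ℂ)
    rw [← haw, inner_neg_right, inner_neg_left, h1, h2]
    simp only [Complex.reCLM_apply, Complex.add_re, Complex.neg_re]
    linarith
  have hcont : ContinuousOn (fun s => (⟪u s - v s, u s - v s⟫_ℂ).re) (Set.Ici 0) :=
    Complex.continuous_re.comp_continuousOn
      ((hu_cont.sub hv_cont).inner (𝕜 := ℂ) (hu_cont.sub hv_cont))
  have hanti : AntitoneOn (fun s => (⟪u s - v s, u s - v s⟫_ℂ).re) (Set.Ici 0) := by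
    refine antitoneOn_of_deriv_nonpos (convex_Ici 0) hcont ?_ ?_
    · intro t ht
      rw [interior_Ici] at ht
      obtain ⟨e, -, he⟩ := hderiv t ht
      exact he.differentiableAt.differentiableWithinAt
    · intro t ht
      rw [interior_Ici] at ht
      obtain ⟨e, he0, he⟩ := hderiv t ht
      rwa [he.deriv]
  intro t ht
  have h := hanti Set.self_mem_Ici ht ht
  simp only [h0, sub_self, inner_zero_left, Complex.zero_re] at h
  exact sub_eq_zero.mp (re_inner_self_nonpos (𝕜 := ℂ) |>.mp h)
end

section
/- Lipschitz continuity with respect to the edge distance of functions with bounded edge derivatives of first order (the Remark after Theorem 4.1): Let b, f ∈ ℕ, let U = (0,∞) × ℝ^b × ℝ^f, and let u : U → ℝ be differentiable with, for all (x,y,z) ∈ U: |∂_x u(x,y,z)| ≤ K, ‖∇_y u(x,y,z)‖ ≤ K, and ‖∇_z u(x,y,z)‖ ≤ K·x, for some constant K ≥ 0. Then for all p = (x,y,z) and q = (x̃,ỹ,z̃) in U, |u(p) − u(q)| ≤ K·(|x − x̃| + ‖y − ỹ‖ + (x + x̃)·‖z − z̃‖) ≤ √3 · K · d(p,q), where d(p,q)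 = (|x − x̃|² + ‖y − ỹ‖² + (x + x̃)²·‖z − z̃‖²)^{1/2}. -/
/-!
The function `u` is restricted to the straight segment from `q` to `p`, which stays in the half space
`{x > 0}`. The derivative along it splits into its `x`, `y` and `z` parts; since the radial
coordinate on the segment is a convex combination of `p.1` and `q.1`, it is at most `p.1 + q.1`,
so the hypotheses bound the derivative by `K (|x - x̃| + ‖y - ỹ‖ + (x + x̃) ‖z - z̃‖)`. The mean value
inequality gives the first estimate; the second is `a + b + c ≤ √3 √(a² + b² + c²)`.
-/

/-- Cauchy–Schwarz against the vector `(1, 1, 1)`. -/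
theorem add_add_le_sqrt_three_mul_sqrt (a b c : ℝ) :
    a + b + c ≤ Real.sqrt 3 * Real.sqrt (a ^ 2 + b ^ 2 + c ^ 2) := by
  rw [← Real.sqrt_mul (by norm_num)]
  apply Real.le_sqrt_of_sq_le
  nlinarith [sq_nonneg (a - b), sq_nonneg (b - c), sq_nonneg (a - c)]

/-- Lipschitz continuity with respect to the edge distance of functions with bounded edge
derivatives of first order (the Remark after Theorem 4.1): if on
`U = (0,∞) × ℝ^b × ℝ^f` one has `|∂ₓu| ≤ K`, `‖∇_y u‖ ≤ K` and `‖∇_z u‖ ≤ K·x`, then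
`|u(p) − u(q)| ≤ K(|x−x̃| + ‖y−ỹ‖ + (x+x̃)‖z−z̃‖) ≤ √3·K·d(p,q)`, where
`d(p,q) = (|x−x̃|² + ‖y−ỹ‖² + (x+x̃)²‖z−z̃‖²)^{1/2}`. -/
theorem edge_lipschitz_of_bounded_edge_derivatives (b f : ℕ) (K : ℝ) (hK : 0 ≤ K)
    (u : ℝ × EuclideanSpace ℝ (Fin b) × EuclideanSpace ℝ (Fin f) → ℝ)
    (hdiff : DifferentiableOn ℝ u
      {p : ℝ × EuclideanSpace ℝ (Fin b) × EuclideanSpace ℝ (Fin f) | 0 < p.1})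
    (hx : ∀ p : ℝ × EuclideanSpace ℝ (Fin b) × EuclideanSpace ℝ (Fin f), 0 < p.1 →
      ∀ ξ : ℝ, |fderiv ℝ u p (ξ, 0, 0)| ≤ K * |ξ|)
    (hy : ∀ p : ℝ × EuclideanSpace ℝ (Fin b) × EuclideanSpace ℝ (Fin f), 0 < p.1 →
      ∀ h : EuclideanSpace ℝ (Fin b), |fderiv ℝ u p (0, h, 0)| ≤ K * ‖h‖)
    (hz : ∀ p : ℝ × EuclideanSpace ℝ (Fin b) × EuclideanSpace ℝ (Fin f), 0 < p.1 →
      ∀ ζ : EuclideanSpace ℝ (Fin f), |fderiv ℝ u p (0, 0, ζ)| ≤ K * p.1 * ‖ζ‖) :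
    ∀ p q : ℝ × EuclideanSpace ℝ (Fin b) × EuclideanSpace ℝ (Fin f),
      0 < p.1 → 0 < q.1 →
      |u p - u q| ≤
          K * (|p.1 - q.1| + ‖p.2.1 - q.2.1‖ + (p.1 + q.1) * ‖p.2.2 - q.2.2‖) ∧
      K * (|p.1 - q.1| + ‖p.2.1 - q.2.1‖ + (p.1 + q.1) * ‖p.2.2 - q.2.2‖) ≤
        Real.sqrt 3 * K *
          Real.sqrt (|p.1 - q.1| ^ 2 + ‖p.2.1 - q.2.1‖ ^ 2
            + (p.1 + q.1) ^ 2 * ‖p.2.2 - q.2.2‖ ^ 2) := by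
  intro p q hp hq
  constructor
  · have hpos : ∀ t ∈ Set.Icc (0 : ℝ) 1, 0 < (q + t • (p - q)).1 := by
      rintro t ⟨h0, h1⟩
      simp only [Prod.fst_add, Prod.smul_fst, Prod.fst_sub, smul_eq_mul]
      rcases h0.eq_or_lt with rfl | h0
      · simpa using hq
      · nlinarith [mul_pos h0 hp, mul_nonneg (sub_nonneg.2 h1) hq.le]
    have hle : ∀ t ∈ Set.Icc (0 : ℝ) 1, (q + t • (p - q)).1 ≤ p.1 + q.1 := by
      rintro t ⟨h0, h1⟩
      simp only [Prod.fst_add, Prod.smul_fst, Prod.fst_sub, smul_eq_mul]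
      nlinarith [mul_nonneg h0 hq.le, mul_nonneg (sub_nonneg.2 h1) hp.le]
    have hopen : IsOpen
        {p : ℝ × EuclideanSpace ℝ (Fin b) × EuclideanSpace ℝ (Fin f) | 0 < p.1} :=
      isOpen_lt continuous_const continuous_fst
    have hderiv : ∀ t ∈ Set.Icc (0 : ℝ) 1,
        HasDerivWithinAt (fun t : ℝ => u (q + t • (p - q)))
          (fderiv ℝ u (q + t • (p - q)) (p - q)) (Set.Icc 0 1) t := by
      intro t ht
      have hu : HasFDerivAt u (fderiv ℝ u (q + t • (p - q))) (q + t • (p - q)) :=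
        (hdiff.differentiableAt (hopen.mem_nhds (hpos t ht))).hasFDerivAt
      have hl : HasDerivAt (fun t : ℝ => q + t • (p - q)) (p - q) t := by
        simpa using ((hasDerivAt_id t).smul_const (p - q)).const_add q
      exact (hu.comp_hasDerivAt t hl).hasDerivWithinAt
    have hbound : ∀ t ∈ Set.Ico (0 : ℝ) 1,
        ‖fderiv ℝ u (q + t • (p - q)) (p - q)‖ ≤
          K * (|p.1 - q.1| + ‖p.2.1 - q.2.1‖ + (p.1 + q.1) * ‖p.2.2 - q.2.2‖) := by
      intro t ht
      have ht' := Set.Ico_subset_Icc_self ht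
      have hsplit : p - q =
          (p.1 - q.1, 0, 0) + (0, p.2.1 - q.2.1, 0) + (0, 0, p.2.2 - q.2.2) := by
        ext <;> simp
      have h1 := hx _ (hpos t ht') (p.1 - q.1)
      have h2 := hy _ (hpos t ht') (p.2.1 - q.2.1)
      have h3 := hz _ (hpos t ht') (p.2.2 - q.2.2)
      have h4 : K * (q + t • (p - q)).1 * ‖p.2.2 - q.2.2‖ ≤
          K * (p.1 + q.1) * ‖p.2.2 - q.2.2‖ := by
        gcongr
        exact hle t ht'
      generalize fderiv ℝ u (q + t • (p - q)) = L at h1 h2 h3 ⊢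
      rw [hsplit, map_add, map_add, Real.norm_eq_abs]
      refine (abs_add_three _ _ _).trans ?_
      linarith
    simpa using norm_image_sub_le_of_norm_deriv_le_segment_01' hderiv hbound
  · have h := add_add_le_sqrt_three_mul_sqrt |p.1 - q.1| ‖p.2.1 - q.2.1‖
      ((p.1 + q.1) * ‖p.2.2 - q.2.2‖)
    rw [mul_pow] at h
    calc _ ≤ K * _ := mul_le_mul_of_nonneg_left h hK
      _ = _ := by ring
end
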